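/- arXiv:2105.07503 — 11 statements merged into one kernel-verified Lean document; each statement's English description precedes it below -/
import Mathlib

section
/- Let γ, γ' : Fin 4 → Matrix (Fin 4) (Fin 4) ℂ be two families of 4×4 complex matrices both satisfying the Clifford anticommutation relations: γ μ * γ ν + γ ν * γ μ = (2 * g μ ν) • 1 and γ' μ * γ' ν + γ' ν * γ' μ = (2 * g μ ν) • 1 for all μ, ν ∈ Fin 4. Then there exists an invertible 4×4 complex matrix S such that γ' μ = S * γ μ * S⁻¹ for all μ; moreover this S is unique up to a multiplicative constant: if S and S' are both invertible and satisfy γ' μ = S * γ μ * S⁻¹ = S' * γ μ * S'⁻¹ for all μ, then S' = c • S for some nonzero c ∈ ℂ. -/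
/-- The Minkowski metric with signature (+,−,−,−) on four indices. -/
def minkowskiMetric : Fin 4 → Fin 4 → ℂ := fun μ ν =>
  if μ = ν then (if μ = 0 then 1 else -1) else 0

open Matrix Complex

/-- The model matrices. -/
def pauliM : Fin 4 → Matrix (Fin 4) (Fin 4) ℂ :=
  ![!![1,0,0,0; 0,-1,0,0; 0,0,-1,0; 0,0,0,1],
    !![0,0,-1,0; 0,0,0,-1; 1,0,0,0; 0,1,0,0],
    !![0,0,I,0; 0,0,0,I; I,0,0,0; 0,I,0,0],
    !![0,-1,0,0; 1,0,0,0; 0,0,0,1; 0,0,-1,0]]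

theorem pm0 (x : Fin 4 → ℂ) : pauliM 0 *ᵥ x = ![x 0, -x 1, -x 2, x 3] := by
  ext i; fin_cases i <;> simp [pauliM, Matrix.mulVec, dotProduct, Fin.sum_univ_four]

theorem pm1 (x : Fin 4 → ℂ) : pauliM 1 *ᵥ x = ![-x 2, -x 3, x 0, x 1] := by
  ext i; fin_cases i <;> simp [pauliM, Matrix.mulVec, dotProduct, Fin.sum_univ_four]

theorem pm2 (x : Fin 4 → ℂ) : pauliM 2 *ᵥ x = ![I * x 2, I * x 3, I * x 0, I * x 1] := by
  ext i; fin_cases i <;> simp [pauliM, Matrix.mulVec, dotProduct, Fin.sum_univ_four]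

theorem pm3 (x : Fin 4 → ℂ) : pauliM 3 *ᵥ x = ![-x 1, x 0, x 3, -x 2] := by
  ext i; fin_cases i <;> simp [pauliM, Matrix.mulVec, dotProduct, Fin.sum_univ_four]

theorem pm_proj (x : Fin 4 → ℂ) : x + pauliM 0 *ᵥ x + I • (pauliM 1 *ᵥ (pauliM 2 *ᵥ x))
    + I • (pauliM 1 *ᵥ (pauliM 2 *ᵥ (pauliM 0 *ᵥ x))) = ![4 * x 0, 0, 0, 0] := by
  obtain ⟨a, b, c, d, rfl⟩ : ∃ a b c d, x = ![a, b, c, d] :=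
    ⟨x 0, x 1, x 2, x 3, by ext i; fin_cases i <;> rfl⟩
  simp only [pm0, pm1, pm2]
  ext i
  fin_cases i <;> simp <;> grind [I_mul_I]

theorem pauli_model (γ : Fin 4 → Matrix (Fin 4) (Fin 4) ℂ)
    (hγ : ∀ μ ν : Fin 4,
      γ μ * γ ν + γ ν * γ μ = (2 * minkowskiMetric μ ν) • (1 : Matrix (Fin 4) (Fin 4) ℂ)) :
    ∃ V : Matrix (Fin 4) (Fin 4) ℂ, IsUnit V ∧ ∀ μ, γ μ * V = V * pauliM μ := by
  have anti : ∀ μ ν : Fin 4, μ ≠ ν → ∀ x, γ μ *ᵥ (γ ν *ᵥ x) = -(γ ν *ᵥ (γ μ *ᵥ x)) := by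
    intro μ ν h x
    have := hγ μ ν
    simp only [minkowskiMetric, if_neg h, mul_zero, zero_smul] at this
    rw [mulVec_mulVec, mulVec_mulVec, eq_neg_of_add_eq_zero_left this, neg_mulVec]
  have sq : ∀ μ : Fin 4, γ μ * γ μ = (if μ = 0 then (1:ℂ) else -1) • 1 := by
    intro μ
    have := hγ μ μ
    simp only [minkowskiMetric, if_true] at this
    rw [← two_smul ℂ, mul_smul] at this
    exact smul_right_injective _ (two_ne_zero (α := ℂ)) this
  have s0 : ∀ x, γ 0 *ᵥ (γ 0 *ᵥ x) = x := by
    intro x; rw [mulVec_mulVec, sq]; simp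
  have sk : ∀ k : Fin 4, k ≠ 0 → ∀ x, γ k *ᵥ (γ k *ᵥ x) = -x := by
    intro k hk x; rw [mulVec_mulVec, sq]; simp [hk, neg_mulVec]
  have s1 := sk 1 (by decide)
  have s2 := sk 2 (by decide)
  have s3 := sk 3 (by decide)
  have a01 := anti 0 1 (by decide)
  have a02 := anti 0 2 (by decide)
  have a03 := anti 0 3 (by decide)
  have a21 := anti 2 1 (by decide)
  have a31 := anti 3 1 (by decide)
  have a23 := anti 2 3 (by decide)
  have nz : ∀ k : Fin 4, k ≠ 0 → ∀ x, x ≠ 0 → γ k *ᵥ x ≠ 0 := by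
    intro k hk x hx h
    apply hx
    have := sk k hk x
    rw [h, mulVec_zero] at this
    simpa using this.symm
  obtain ⟨y, hy, hAy⟩ : ∃ y, y ≠ 0 ∧ γ 0 *ᵥ y = y := by
    by_cases h : (fun _ => 1 : Fin 4 → ℂ) + γ 0 *ᵥ (fun _ => 1) = 0
    · refine ⟨γ 3 *ᵥ (fun _ => 1), nz 3 (by decide) _ ?_, ?_⟩
      · intro h; simpa using congrFun h 0
      · rw [a03, eq_neg_of_add_eq_zero_right h, mulVec_neg, neg_neg]
    · refine ⟨_, h, ?_⟩
      rw [mulVec_add, s0, add_comm]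
  -- γ2 v = I γ1 v
  obtain ⟨v, hv, hA, hB⟩ : ∃ v, v ≠ 0 ∧ γ 0 *ᵥ v = v ∧ γ 2 *ᵥ v = I • (γ 1 *ᵥ v) := by
    by_cases h : y + I • (γ 1 *ᵥ (γ 2 *ᵥ y)) = 0
    · refine ⟨γ 1 *ᵥ (γ 3 *ᵥ y), nz 1 (by decide) _ (nz 3 (by decide) _ hy), ?_, ?_⟩
      · rw [a01, a03, hAy, mulVec_neg, neg_neg]
      · have h2 : γ 2 *ᵥ y = -(I • (γ 1 *ᵥ y)) := by
          have h3 := congrArg (fun z => γ 1 *ᵥ z) h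
          simp only [mulVec_add, mulVec_smul, s1, mulVec_zero] at h3
          have h4 := congrArg (fun z => I • z) h3
          simp only [smul_add, smul_neg, smul_smul, I_mul_I, smul_zero, neg_smul, one_smul, neg_neg] at h4
          exact eq_neg_of_add_eq_zero_right h4
        rw [a21, a23, h2]
        simp only [mulVec_neg, mulVec_smul, s1, a31, neg_neg, smul_neg]
    · refine ⟨_, h, ?_, ?_⟩
      · simp only [mulVec_add, mulVec_smul, a01, a02, mulVec_neg, hAy, neg_neg]
      · simp only [mulVec_add, mulVec_smul, a21, s2, s1, mulVec_neg, smul_add, smul_neg, smul_smul, I_mul_I, neg_smul, one_smul, neg_neg]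
        abel
  have key : ∀ μ, γ μ * (Matrix.of fun i j => (![v, γ 3 *ᵥ v, γ 1 *ᵥ v, γ 1 *ᵥ (γ 3 *ᵥ v)] : Fin 4 → Fin 4 → ℂ) j i)
      = (Matrix.of fun i j => (![v, γ 3 *ᵥ v, γ 1 *ᵥ v, γ 1 *ᵥ (γ 3 *ᵥ v)] : Fin 4 → Fin 4 → ℂ) j i) * pauliM μ := by
    intro μ
    ext i j
    change (γ μ *ᵥ ((![v, γ 3 *ᵥ v, γ 1 *ᵥ v, γ 1 *ᵥ (γ 3 *ᵥ v)] : Fin 4 → Fin 4 → ℂ) j)) i = _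
    rw [Matrix.mul_apply, Fin.sum_univ_four]
    fin_cases μ <;> fin_cases j <;>
      simp [pauliM, a01, a02, a03, a21, a31, a23, s1, s3, hA, hB, mulVec_neg, mulVec_smul, mul_comm, -mulVec_mulVec]
  refine ⟨_, ?_, key⟩
  rw [← Matrix.mulVec_injective_iff_isUnit]
  rw [← Matrix.coe_mulVecLin, ← LinearMap.ker_eq_bot, LinearMap.ker_eq_bot']
  intro x hx
  rw [Matrix.mulVecLin_apply] at hx
  generalize hV : (Matrix.of fun i j => (![v, γ 3 *ᵥ v, γ 1 *ᵥ v, γ 1 *ᵥ (γ 3 *ᵥ v)] : Fin 4 → Fin 4 → ℂ) j i) = V at hx key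
  have st : ∀ μ x, V *ᵥ x = 0 → V *ᵥ (pauliM μ *ᵥ x) = 0 := by
    intro μ x hx
    rw [mulVec_mulVec, ← key, ← mulVec_mulVec, hx, mulVec_zero]
  have first : ∀ x : Fin 4 → ℂ, V *ᵥ x = 0 → x 0 = 0 := by
    intro x hx
    have h1 := st 0 x hx
    have h2 := st 1 _ (st 2 x hx)
    have h3 := st 1 _ (st 2 _ h1)
    have h4 : V *ᵥ (x + pauliM 0 *ᵥ x + I • (pauliM 1 *ᵥ (pauliM 2 *ᵥ x))
        + I • (pauliM 1 *ᵥ (pauliM 2 *ᵥ (pauliM 0 *ᵥ x)))) = 0 := by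
      simp only [mulVec_add, mulVec_smul] at *
      simp only [hx, h1, h2, h3, smul_zero, add_zero]
    have h5 : x + pauliM 0 *ᵥ x + I • (pauliM 1 *ᵥ (pauliM 2 *ᵥ x))
        + I • (pauliM 1 *ᵥ (pauliM 2 *ᵥ (pauliM 0 *ᵥ x))) = ![4 * x 0, 0, 0, 0] := pm_proj x
    rw [h5] at h4
    by_contra hx0
    apply hv
    ext i
    have := congrFun h4 i
    rw [← hV] at this
    simpa [Matrix.mulVec, dotProduct, Fin.sum_univ_four, hx0] using this
  have g0 := first x hx
  have g1 := first _ (st 3 x hx)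
  have g2 := first _ (st 1 x hx)
  have g3 := first _ (st 1 _ (st 3 x hx))
  simp [pm1, pm3, -mulVec_mulVec] at g1 g2 g3
  ext i
  fin_cases i <;> simp [*]

theorem pauli_comm (T : Matrix (Fin 4) (Fin 4) ℂ) (h : ∀ μ, T * pauliM μ = pauliM μ * T) :
    T = T 0 0 • 1 := by
  have h0 := fun i j => congrFun (congrFun (h 0) i) j
  have h1 := fun i j => congrFun (congrFun (h 1) i) j
  have h2 := fun i j => congrFun (congrFun (h 2) i) j
  have h3 := fun i j => congrFun (congrFun (h 3) i) j
  simp only [pauliM, Matrix.mul_apply, Fin.sum_univ_four] at h0 h1 h2 h3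
  simp [Fin.forall_fin_succ] at h0 h1 h2 h3
  have hI := I_mul_I
  ext i j
  fin_cases i <;> fin_cases j <;> simp <;> grind [I_mul_I]

/-- **Pauli's Fundamental Theorem.** Any two families of 4×4 complex matrices satisfying
the Clifford anticommutation relations are related by a similarity transformation,
which is unique up to a nonzero multiplicative constant. -/
theorem pauli_fundamental_theorem
    (γ γ' : Fin 4 → Matrix (Fin 4) (Fin 4) ℂ)
    (hγ : ∀ μ ν : Fin 4,
      γ μ * γ ν + γ ν * γ μ = (2 * minkowskiMetric μ ν) • (1 : Matrix (Fin 4) (Fin 4) ℂ))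
    (hγ' : ∀ μ ν : Fin 4,
      γ' μ * γ' ν + γ' ν * γ' μ = (2 * minkowskiMetric μ ν) • (1 : Matrix (Fin 4) (Fin 4) ℂ)) :
    (∃ S : Matrix (Fin 4) (Fin 4) ℂ, IsUnit S ∧ ∀ μ : Fin 4, γ' μ = S * γ μ * S⁻¹) ∧
    (∀ S S' : Matrix (Fin 4) (Fin 4) ℂ, IsUnit S → IsUnit S' →
      (∀ μ : Fin 4, γ' μ = S * γ μ * S⁻¹) → (∀ μ : Fin 4, γ' μ = S' * γ μ * S'⁻¹) →
      ∃ c : ℂ, c ≠ 0 ∧ S' = c • S) := by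
  obtain ⟨V, hV, hVM⟩ := pauli_model γ hγ
  obtain ⟨W, hW, hWM⟩ := pauli_model γ' hγ'
  have hVd := (Matrix.isUnit_iff_isUnit_det V).1 hV
  have hWd := (Matrix.isUnit_iff_isUnit_det W).1 hW
  refine ⟨⟨W * V⁻¹, hW.mul ((Matrix.isUnit_nonsing_inv_iff).2 hV), fun μ => ?_⟩, ?_⟩
  · rw [Matrix.mul_inv_rev, Matrix.nonsing_inv_nonsing_inv _ hVd]
    have : W * V⁻¹ * γ μ * (V * W⁻¹) = W * (V⁻¹ * (γ μ * V)) * W⁻¹ := by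
      simp only [Matrix.mul_assoc]
    rw [this, hVM, Matrix.nonsing_inv_mul_cancel_left _ _ hVd, ← hWM,
      Matrix.mul_nonsing_inv_cancel_right _ _ hWd]
  · intro S S' hS hS' h h'
    have hSd := (Matrix.isUnit_iff_isUnit_det S).1 hS
    have hSd' := (Matrix.isUnit_iff_isUnit_det S').1 hS'
    have e : ∀ μ, γ' μ * S = S * γ μ := fun μ => by
      rw [h μ, Matrix.nonsing_inv_mul_cancel_right _ _ hSd]
    have e' : ∀ μ, γ' μ * S' = S' * γ μ := fun μ => by
      rw [h' μ, Matrix.nonsing_inv_mul_cancel_right _ _ hSd']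
    have f : ∀ μ, S⁻¹ * γ' μ = γ μ * S⁻¹ := fun μ => by
      rw [h μ, Matrix.mul_assoc S, Matrix.nonsing_inv_mul_cancel_left _ _ hSd]
    have k : ∀ μ, V⁻¹ * γ μ = pauliM μ * V⁻¹ := fun μ => by
      rw [← Matrix.mul_nonsing_inv_cancel_right V (V⁻¹ * γ μ) hVd, Matrix.mul_assoc V⁻¹, hVM,
        Matrix.nonsing_inv_mul_cancel_left _ _ hVd]
    have hT := pauli_comm (V⁻¹ * (S⁻¹ * (S' * V))) fun μ => by
      simp only [Matrix.mul_assoc]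
      rw [← hVM, ← Matrix.mul_assoc S', ← e', Matrix.mul_assoc, ← Matrix.mul_assoc S⁻¹, f,
        Matrix.mul_assoc, ← Matrix.mul_assoc V⁻¹, k, Matrix.mul_assoc]
    generalize (V⁻¹ * (S⁻¹ * (S' * V))) 0 0 = c at hT
    have hc : S' = c • S := by
      have h1 := congrArg (fun X => S * (V * X) * V⁻¹) hT
      simpa [Matrix.mul_nonsing_inv_cancel_left _ _ hVd, Matrix.mul_nonsing_inv_cancel_left _ _ hSd,
        Matrix.mul_nonsing_inv_cancel_right _ _ hVd] using h1
    refine ⟨c, ?_, hc⟩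
    rintro rfl
    rw [zero_smul] at hc
    rw [hc] at hS'
    exact not_isUnit_zero hS'
end

section
/- Let E be a complex Hilbert space and H : ℝ → (E →L[ℂ] E) a strongly continuous map such that H t is self-adjoint for every t. Then there exists an evolution family U : ℝ → ℝ → (E →L[ℂ] E) such that (i) U t t = 1 for all t; (ii) U r s ∘ U s t = U r t for all r, s, t ∈ ℝ; and (iii) for every s ∈ ℝ and every ψ ∈ E, the map t ↦ U t s ψ is differentiable with derivative (−Complex.I) • (H t) ((U t s) ψ) at every t ∈ ℝ. -/
section Aux
variable {E : Type*} [NormedAddCommGroup E] [InnerProductSpace ℂ E] [CompleteSpace E]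

theorem aux_bound (H : ℝ → (E →L[ℂ] E)) (hcont : ∀ ψ : E, Continuous fun t : ℝ => H t ψ)
    (T : ℝ) : ∃ M : ℝ, 0 ≤ M ∧ ∀ t ∈ Set.Icc (-T) T, ‖H t‖ ≤ M := by
  have h := banach_steinhaus (g := fun t : Set.Icc (-T) T => H t) (by
    intro x
    obtain ⟨C, hC⟩ := (isCompact_Icc (a := -T) (b := T)).exists_bound_of_continuousOn
      (hcont x).continuousOn
    exact ⟨C, fun i => hC i i.2⟩)
  obtain ⟨C, hC⟩ := h
  exact ⟨max C 0, le_max_right _ _, fun t ht => (hC ⟨t, ht⟩).trans (le_max_left _ _)⟩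

theorem aux_cont (H : ℝ → (E →L[ℂ] E)) (hcont : ∀ ψ : E, Continuous fun t : ℝ => H t ψ)
    (x : ℝ → E) (hx : Continuous x) : Continuous fun t => H t (x t) := by
  rw [continuous_iff_continuousAt]
  intro t
  obtain ⟨M, hM0, hM⟩ := aux_bound H hcont (|t| + 1)
  have h1 : Filter.Tendsto (fun τ => M * ‖x τ - x t‖ + ‖H τ (x t) - H t (x t)‖) (nhds t)
      (nhds 0) := by
    have : Continuous (fun τ => M * ‖x τ - x t‖ + ‖H τ (x t) - H t (x t)‖) := by
      have := hcont (x t)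
      fun_prop
    simpa using this.tendsto t
  rw [ContinuousAt, tendsto_iff_norm_sub_tendsto_zero]
  refine squeeze_zero' (Filter.Eventually.of_forall fun _ => norm_nonneg _) ?_ h1
  have hmem : Set.Icc (-(|t| + 1)) (|t| + 1) ∈ nhds t :=
    Icc_mem_nhds (by linarith [neg_abs_le t]) (by linarith [le_abs_self t])
  filter_upwards [hmem] with τ hτ
  calc ‖H τ (x τ) - H t (x t)‖ = ‖H τ (x τ - x t) + (H τ (x t) - H t (x t))‖ := by
        rw [map_sub]; congr 1; abel
    _ ≤ ‖H τ (x τ - x t)‖ + ‖H τ (x t) - H t (x t)‖ := norm_add_le _ _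
    _ ≤ _ := by
        gcongr
        exact (H τ).le_of_opNorm_le (hM τ hτ) _

noncomputable def auxSeq (H : ℝ → (E →L[ℂ] E)) (s : ℝ) (ψ : E) : ℕ → ℝ → E
  | 0 => fun _ => ψ
  | n + 1 => fun t => ∫ τ in s..t, (-Complex.I) • H τ (auxSeq H s ψ n τ)

theorem auxSeq_cont (H : ℝ → (E →L[ℂ] E)) (hcont : ∀ ψ : E, Continuous fun t : ℝ => H t ψ)
    (s : ℝ) (ψ : E) (n : ℕ) : Continuous (auxSeq H s ψ n) := by
  induction n with
  | zero => exact continuous_const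
  | succ n ih =>
    have := (aux_cont H hcont _ ih).const_smul (-Complex.I)
    exact intervalIntegral.continuous_primitive (fun a b => this.intervalIntegrable a b) s

theorem auxSeq_deriv (H : ℝ → (E →L[ℂ] E)) (hcont : ∀ ψ : E, Continuous fun t : ℝ => H t ψ)
    (s : ℝ) (ψ : E) (n : ℕ) (t : ℝ) :
    HasDerivAt (auxSeq H s ψ (n+1)) ((-Complex.I) • H t (auxSeq H s ψ n t)) t := by
  have := (aux_cont H hcont _ (auxSeq_cont H hcont s ψ n)).const_smul (-Complex.I)
  exact this.integral_hasStrictDerivAt s t |>.hasDerivAt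

theorem auxSeq_bound (H : ℝ → (E →L[ℂ] E))
    (s : ℝ) (ψ : E) (T M : ℝ) (hM0 : 0 ≤ M) (hs : s ∈ Set.Icc (-T) T)
    (hM : ∀ t ∈ Set.Icc (-T) T, ‖H t‖ ≤ M) (n : ℕ) (t : ℝ) (ht : t ∈ Set.Icc (-T) T) :
    ‖auxSeq H s ψ n t‖ ≤ ‖ψ‖ * (M ^ n * |t - s| ^ n / n.factorial) := by
  induction n generalizing t with
  | zero => simp [auxSeq]
  | succ n ih =>
    have hsub : Set.uIoc s t ⊆ Set.Icc (-T) T :=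
      Set.uIoc_subset_uIcc.trans (Set.uIcc_subset_Icc hs ht)
    have key : ‖∫ τ in s..t, (-Complex.I) • H τ (auxSeq H s ψ n τ)‖ ≤
        ∫ τ in Set.uIoc s t, (‖ψ‖ * M ^ (n+1) / n.factorial) * |τ - s| ^ n := by
      rw [intervalIntegral.norm_integral_eq_norm_integral_uIoc]
      refine MeasureTheory.norm_integral_le_of_norm_le ?_ ?_
      · have : Continuous fun τ : ℝ => (‖ψ‖ * M ^ (n+1) / n.factorial) * |τ - s| ^ n := by
          fun_prop
        exact (this.integrableOn_uIoc)
      · refine (MeasureTheory.ae_restrict_iff' measurableSet_uIoc).2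
          (Filter.Eventually.of_forall fun τ hτ => ?_)
        have h1 := (H τ).le_of_opNorm_le (hM τ (hsub hτ)) (auxSeq H s ψ n τ)
        have h2 := mul_le_mul_of_nonneg_left (ih τ (hsub hτ)) hM0
        rw [norm_smul]
        simp only [norm_neg, Complex.norm_I, one_mul]
        refine h1.trans (h2.trans (le_of_eq ?_))
        ring
    refine key.trans (le_of_eq ?_)
    rw [MeasureTheory.integral_const_mul, integral_pow_abs_sub_uIoc, Nat.factorial_succ]
    push_cast
    field_simp

theorem aux_exists (H : ℝ → (E →L[ℂ] E)) (hcont : ∀ ψ : E, Continuous fun t : ℝ => H t ψ)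
    (s : ℝ) (ψ : E) : ∃ x : ℝ → E, x s = ψ ∧
      ∀ t, HasDerivAt x ((-Complex.I) • H t (x t)) t := by
  have hsum : ∀ t, Summable fun n => auxSeq H s ψ n t := by
    intro t
    obtain ⟨M, hM0, hM⟩ := aux_bound H hcont (|t| + |s|)
    have h := Real.summable_pow_div_factorial (M * |t - s|)
    refine Summable.of_norm_bounded (h.mul_left ‖ψ‖) fun n => ?_
    rw [mul_pow]
    exact auxSeq_bound H s ψ (|t| + |s|) M hM0 (abs_le.1 (by simp)) hM n t
      (abs_le.1 (by simp))
  refine ⟨fun t => ψ + ∑' n, auxSeq H s ψ (n+1) t, ?_, ?_⟩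
  · simp [auxSeq]
  · intro t
    set T := |t| + |s| + 1 with hT
    obtain ⟨M, hM0, hM⟩ := aux_bound H hcont T
    have hs : s ∈ Set.Ioo (-T) T := abs_lt.1 (by linarith [abs_nonneg t])
    have ht : t ∈ Set.Ioo (-T) T := abs_lt.1 (by linarith [abs_nonneg s])
    have hu : Summable fun n : ℕ => M * (‖ψ‖ * ((M * (2 * T)) ^ n / n.factorial)) :=
      ((Real.summable_pow_div_factorial (M * (2 * T))).mul_left _).mul_left _
    have hd := hasDerivAt_tsum_of_isPreconnected (t := Set.Ioo (-T) T)
      (g := fun n => auxSeq H s ψ (n+1)) hu isOpen_Ioo isPreconnected_Ioo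
      (fun n y _ => auxSeq_deriv H hcont s ψ n y) (by
        intro n y hy
        have hy' := Set.Ioo_subset_Icc_self hy
        rw [norm_smul]
        simp only [norm_neg, Complex.norm_I, one_mul]
        refine ((H y).le_of_opNorm_le (hM y hy') _).trans ?_
        gcongr
        refine (auxSeq_bound H s ψ T M hM0 (Set.Ioo_subset_Icc_self hs) hM n y hy').trans ?_
        rw [mul_pow]
        gcongr
        rw [abs_le]
        constructor <;> linarith [hy.1, hy.2, hs.1, hs.2])
      hs ((summable_nat_add_iff 1).2 (hsum s)) ht
    have heq : (-Complex.I) • H t (ψ + ∑' n, auxSeq H s ψ (n+1) t) =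
        ∑' n, (-Complex.I) • H t (auxSeq H s ψ n t) := by
      have h0 : ψ + ∑' n, auxSeq H s ψ (n+1) t = ∑' n, auxSeq H s ψ n t :=
        ((hsum t).tsum_eq_zero_add).symm
      rw [h0]
      exact ((-Complex.I) • H t).map_tsum (hsum t)
    rw [heq]
    exact hd.const_add ψ

theorem aux_norm (H : ℝ → (E →L[ℂ] E)) (hsa : ∀ t : ℝ, IsSelfAdjoint (H t))
    (x : ℝ → E) (hx : ∀ t, HasDerivAt x ((-Complex.I) • H t (x t)) t) (s t : ℝ) :
    ‖x t‖ = ‖x s‖ := by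
  have hd : ∀ t, HasDerivAt (fun t => inner ℂ (x t) (x t)) 0 t := by
    intro t
    have h := (hx t).inner ℂ (hx t)
    have hs : inner ℂ (H t (x t)) (x t) = inner ℂ (x t) (H t (x t)) :=
      (hsa t).isSymmetric (x t) (x t)
    have h0 : inner ℂ (x t) ((-Complex.I) • H t (x t)) +
        inner ℂ ((-Complex.I) • H t (x t)) (x t) = 0 := by
      rw [inner_smul_left, inner_smul_right, hs]
      simp
    rw [h0] at h
    exact h
  have h := is_const_of_deriv_eq_zero (fun t => (hd t).differentiableAt)
    (fun t => (hd t).deriv) t s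
  simp only [inner_self_eq_norm_sq_to_K] at h
  have h2 : ‖x t‖ ^ 2 = ‖x s‖ ^ 2 := by exact_mod_cast h
  exact (sq_eq_sq₀ (norm_nonneg _) (norm_nonneg _)).1 h2

theorem aux_unique (H : ℝ → (E →L[ℂ] E)) (hsa : ∀ t : ℝ, IsSelfAdjoint (H t))
    (x y : ℝ → E) (hx : ∀ t, HasDerivAt x ((-Complex.I) • H t (x t)) t)
    (hy : ∀ t, HasDerivAt y ((-Complex.I) • H t (y t)) t) (s : ℝ) (h : x s = y s) (t : ℝ) :
    x t = y t := by
  have := aux_norm H hsa (fun t => x t - y t) (fun t => by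
    have := (hx t).sub (hy t)
    rw [map_sub, smul_sub]
    exact this) s t
  rw [h, sub_self, norm_zero, norm_eq_zero, sub_eq_zero] at this
  exact this

end Aux

/-- For a strongly continuous family of bounded self-adjoint operators `H t` on a complex
Hilbert space, there exists an evolution family `U` with `U t t = 1`,
`U r s ∘ U s t = U r t`, and `∂ₜ (U t s ψ) = −i · H t (U t s ψ)`. -/
theorem evolution_family_exists
    {E : Type*} [NormedAddCommGroup E] [InnerProductSpace ℂ E] [CompleteSpace E]
    (H : ℝ → (E →L[ℂ] E))
    (hcont : ∀ ψ : E, Continuous fun t : ℝ => H t ψ)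
    (hsa : ∀ t : ℝ, IsSelfAdjoint (H t)) :
    ∃ U : ℝ → ℝ → (E →L[ℂ] E),
      (∀ t : ℝ, U t t = 1) ∧
      (∀ r s t : ℝ, (U r s).comp (U s t) = U r t) ∧
      (∀ (s : ℝ) (ψ : E) (t : ℝ),
        HasDerivAt (fun τ : ℝ => U τ s ψ) ((-Complex.I) • (H t) ((U t s) ψ)) t) := by
  choose x hx0 hx using aux_exists H hcont
  let U : ℝ → ℝ → (E →L[ℂ] E) := fun t s => LinearMap.mkContinuous
    { toFun := fun ψ => x s ψ t
      map_add' := fun a b => by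
        refine aux_unique H hsa (x s (a + b)) (fun t => x s a t + x s b t) (hx s _)
          (fun t => ?_) s (by simp [hx0]) t
        have := (hx s a t).add (hx s b t)
        rw [map_add, smul_add]
        exact this
      map_smul' := fun c a => by
        refine aux_unique H hsa (x s (c • a)) (fun t => c • x s a t) (hx s _)
          (fun t => ?_) s (by simp [hx0]) t
        have := (hx s a t).const_smul c
        rw [map_smul, smul_comm]
        exact this } 1 (fun ψ => by
          have := aux_norm H hsa (x s ψ) (hx s ψ) s t
          simp only [LinearMap.coe_mk, AddHom.coe_mk, one_mul]
          rw [this, hx0])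
  refine ⟨U, fun t => ?_, fun r s t => ?_, fun s ψ t => hx s ψ t⟩
  · ext ψ
    exact hx0 t ψ
  · ext ψ
    exact aux_unique H hsa (x s (x t ψ s)) (x t ψ) (hx _ _) (hx _ _) s (hx0 _ _) r
end

section
/- Let n ∈ ℕ, let P be a multivariate polynomial over ℂ in n variables with evaluation map F v = MvPolynomial.eval v P for v : Fin n → ℂ, and let M be an n×n complex matrix. Then the following are equivalent: (i) F ((Matrix.exp ℂ ((t : ℂ) • M)).mulVec v) = F v for all t ∈ ℝ and all v : Fin n → ℂ; (ii) fderiv ℂ F v (M.mulVec v) = 0 for all v : Fin n → ℂ. -/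
open scoped Matrix.Norms.Operator in
theorem aux_hasDerivAt_exp_mulVec (n : ℕ) (M : Matrix (Fin n) (Fin n) ℂ) (v : Fin n → ℂ) (t : ℝ) :
    HasDerivAt (fun s : ℝ => (NormedSpace.exp ((s : ℂ) • M)).mulVec v)
      (M.mulVec ((NormedSpace.exp ((t : ℂ) • M)).mulVec v)) t := by
  have h := hasDerivAt_exp_smul_const' (𝕂 := ℂ) M (t : ℂ)
  let L : Matrix (Fin n) (Fin n) ℂ →ₗ[ℂ] (Fin n → ℂ) :=
    { toFun := fun A => A.mulVec v
      map_add' := fun A B => Matrix.add_mulVec A B v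
      map_smul' := fun c A => Matrix.smul_mulVec c A v }
  have h2 := L.toContinuousLinearMap.hasFDerivAt.comp_hasDerivAt (t : ℂ) h
  have h3 := h2.scomp t (Complex.ofRealCLM.hasDerivAt (x := t))
  rw [Matrix.mulVec_mulVec]
  have e : Complex.ofRealCLM 1 = (1 : ℂ) := by simp
  rw [e, one_smul] at h3
  exact h3

theorem aux_differentiable_eval (n : ℕ) (P : MvPolynomial (Fin n) ℂ) :
    Differentiable ℂ (fun w : Fin n → ℂ => MvPolynomial.eval w P) := by
  induction P using MvPolynomial.induction_on with
  | C a => simp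
  | add p q hp hq => simp only [map_add]; exact hp.add hq
  | mul_X p i hp => simp only [map_mul, MvPolynomial.eval_X]; exact hp.mul (differentiable_apply i)

theorem aux_hasDerivAt (n : ℕ) (P : MvPolynomial (Fin n) ℂ) (M : Matrix (Fin n) (Fin n) ℂ)
    (v : Fin n → ℂ) (t : ℝ) :
    HasDerivAt (fun s : ℝ => MvPolynomial.eval ((NormedSpace.exp ((s : ℂ) • M)).mulVec v) P)
      (fderiv ℂ (fun w : Fin n → ℂ => MvPolynomial.eval w P)
        ((NormedSpace.exp ((t : ℂ) • M)).mulVec v)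
        (M.mulVec ((NormedSpace.exp ((t : ℂ) • M)).mulVec v))) t :=
  (((aux_differentiable_eval n P _).hasFDerivAt).restrictScalars ℝ).comp_hasDerivAt t
    (aux_hasDerivAt_exp_mulVec n M v t)

/-- A polynomial `P` in `n` complex variables is invariant under the one-parameter group
`t ↦ exp(t M)` if and only if its derivative along the vector field `v ↦ M v` vanishes
everywhere. -/
theorem polynomial_invariant_iff_derivative_vanishes
    (n : ℕ) (P : MvPolynomial (Fin n) ℂ) (M : Matrix (Fin n) (Fin n) ℂ) :
    (∀ (t : ℝ) (v : Fin n → ℂ),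
        MvPolynomial.eval ((NormedSpace.exp ((t : ℂ) • M)).mulVec v) P =
          MvPolynomial.eval v P) ↔
      ∀ v : Fin n → ℂ,
        fderiv ℂ (fun w : Fin n → ℂ => MvPolynomial.eval w P) v (M.mulVec v) = 0 := by
  constructor
  · intro h v
    have h1 := aux_hasDerivAt n P M v 0
    simp only [h] at h1
    have h2 := h1.unique (hasDerivAt_const (0 : ℝ) (MvPolynomial.eval v P))
    simpa [NormedSpace.exp_zero] using h2
  · intro h t v
    have h1 := is_const_of_deriv_eq_zero
      (fun s => (aux_hasDerivAt n P M v s).differentiableAt)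
      (fun s => (aux_hasDerivAt n P M v s).deriv.trans (h _)) t 0
    simpa [NormedSpace.exp_zero] using h1
end

section
/- Let n ∈ ℕ, let P be a multivariate polynomial over ℂ in n variables with evaluation map F v = MvPolynomial.eval v P for v : Fin n → ℂ, and let M be an n×n complex matrix. If F ((Matrix.exp ℂ ((t : ℂ) • M)).mulVec v) = F v for all t ∈ ℝ and all v : Fin n → ℂ, then also F ((Matrix.exp ℂ ((t : ℂ) • (Complex.I • M))).mulVec v) = F v for all t ∈ ℝ and all v : Fin n → ℂ. (A polynomial invariant under the one-parameter group generated by M is invariant under the one-parameter group generated by iM; this is the key step of the Unitarian Trick showing that polynomial invariants of a connected complexified matrix group coincide with those of its maximal compact subgroup.) -/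
open Topology Filter in
theorem entire_eq_of_real {f : ℂ → ℂ} (c : ℂ) (hf : AnalyticOnNhd ℂ f Set.univ)
    (h : ∀ t : ℝ, f t = c) (z : ℂ) : f z = c := by
  have key : f = fun _ => c := by
    refine hf.eq_of_frequently_eq (z₀ := 0) analyticOnNhd_const ?_
    have ht : Tendsto (fun t : ℝ => (t : ℂ)) (𝓝[≠] 0) (𝓝[≠] 0) := by
      refine tendsto_nhdsWithin_iff.2 ⟨?_, ?_⟩
      · have : Tendsto (fun t : ℝ => (t : ℂ)) (𝓝 0) (𝓝 ((0 : ℝ) : ℂ)) :=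
          Complex.continuous_ofReal.tendsto 0
        simpa using this.mono_left nhdsWithin_le_nhds
      · filter_upwards [self_mem_nhdsWithin] with t ht
        simpa using ht
    exact ht.frequently (Frequently.of_forall h)
  exact congrFun key z

open scoped Matrix.Norms.Operator in
theorem exp_entry_differentiable {n : ℕ} (M : Matrix (Fin n) (Fin n) ℂ) (i j : Fin n) :
    Differentiable ℂ (fun z : ℂ => NormedSpace.exp (z • M) i j) := by
  have h : Differentiable ℂ (fun z : ℂ => NormedSpace.exp (z • M)) :=
    fun z => (hasDerivAt_exp_smul_const (𝕂 := ℂ) M z).differentiableAt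
  let L : Matrix (Fin n) (Fin n) ℂ →ₗ[ℂ] ℂ := Matrix.entryLinearMap ℂ ℂ i j
  exact (LinearMap.toContinuousLinearMap L).differentiable.comp h

/-- **Key step of the Unitarian Trick.** If a polynomial `P` in `n` complex variables is
invariant under the one-parameter group generated by a matrix `M`, then it is also invariant
under the one-parameter group generated by `i • M`. -/
theorem polynomial_invariant_under_I_smul
    (n : ℕ) (P : MvPolynomial (Fin n) ℂ) (M : Matrix (Fin n) (Fin n) ℂ)
    (hinv : ∀ (t : ℝ) (v : Fin n → ℂ),
        MvPolynomial.eval ((NormedSpace.exp ((t : ℂ) • M)).mulVec v) P =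
          MvPolynomial.eval v P) :
    ∀ (t : ℝ) (v : Fin n → ℂ),
        MvPolynomial.eval ((NormedSpace.exp ((t : ℂ) • (Complex.I • M))).mulVec v) P =
          MvPolynomial.eval v P := by
  intro t v
  rw [smul_smul]
  refine entire_eq_of_real
    (f := fun z : ℂ => MvPolynomial.eval ((NormedSpace.exp (z • M)).mulVec v) P)
    _ ?_ (fun s => hinv s v) _
  have := AnalyticOnNhd.aeval_mvPolynomial (𝕜 := ℂ) (s := Set.univ)
    (f := fun z : ℂ => (NormedSpace.exp (z • M)).mulVec v) (fun i => ?_) P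
  · simpa [MvPolynomial.aeval_eq_eval] using this
  · have hd : Differentiable ℂ (fun z : ℂ => (NormedSpace.exp (z • M)).mulVec v i) := by
      simp only [Matrix.mulVec, dotProduct]
      exact Differentiable.fun_sum fun j _ => (exp_entry_differentiable M i j).mul_const _
    exact fun z _ => hd.analyticAt z
end

section
/- For every family of real coefficients ω : Fin 4 → Fin 4 → ℝ, the matrix S = Matrix.exp ℂ ((1/2) • ∑_{ρ,σ} (ω ρ σ : ℂ) • S^{ρσ}) satisfies Sᵀ * C * S = C. (Hence the skew-symmetric bilinear form ψᵀ C φ on Dirac spinors is invariant under the spinor representation of any proper orthochronous Lorentz transformation.) -/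
noncomputable def γ0 : Matrix (Fin 4) (Fin 4) ℂ :=
  !![1, 0, 0, 0; 0, 1, 0, 0; 0, 0, -1, 0; 0, 0, 0, -1]

noncomputable def γ1 : Matrix (Fin 4) (Fin 4) ℂ :=
  !![0, 0, 0, 1; 0, 0, 1, 0; 0, -1, 0, 0; -1, 0, 0, 0]

noncomputable def γ2 : Matrix (Fin 4) (Fin 4) ℂ :=
  !![0, 0, 0, -Complex.I; 0, 0, Complex.I, 0; 0, Complex.I, 0, 0; -Complex.I, 0, 0, 0]

noncomputable def γ3 : Matrix (Fin 4) (Fin 4) ℂ :=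
  !![0, 0, 1, 0; 0, 0, 0, -1; -1, 0, 0, 0; 0, 1, 0, 0]

/-- The Dirac gamma matrices, indexed by `μ : Fin 4`. -/
noncomputable def γ : Fin 4 → Matrix (Fin 4) (Fin 4) ℂ := ![γ0, γ1, γ2, γ3]

/-- The matrix `C = i γ¹ γ³`. -/
noncomputable def Cmat : Matrix (Fin 4) (Fin 4) ℂ := Complex.I • (γ1 * γ3)

/-- The matrix `γ⁵ = i γ⁰ γ¹ γ² γ³`. -/
noncomputable def γ5 : Matrix (Fin 4) (Fin 4) ℂ := Complex.I • (γ0 * γ1 * γ2 * γ3)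

/-- The Lorentz generators `S^{ρσ} = (1/4)(γ^ρ γ^σ − γ^σ γ^ρ)`. -/
noncomputable def Sgen (ρ σ : Fin 4) : Matrix (Fin 4) (Fin 4) ℂ :=
  (1 / 4 : ℂ) • (γ ρ * γ σ - γ σ * γ ρ)

theorem Cmat_eq_aux : Cmat = !![0, Complex.I, 0, 0; -Complex.I, 0, 0, 0;
    0, 0, 0, Complex.I; 0, 0, -Complex.I, 0] := by
  ext i j
  fin_cases i <;> fin_cases j <;>
    simp [Cmat, γ1, γ3, Matrix.mul_apply, Fin.sum_univ_four]

theorem Cmat_sq_aux : Cmat * Cmat = 1 := by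
  rw [Cmat_eq_aux]
  ext i j
  fin_cases i <;> fin_cases j <;> simp [Matrix.mul_apply, Fin.sum_univ_four]

theorem γ_transpose_aux (μ : Fin 4) : (γ μ).transpose * Cmat = Cmat * γ μ := by
  rw [Cmat_eq_aux]
  fin_cases μ <;> ext i j <;> fin_cases i <;> fin_cases j <;>
    simp [γ, γ0, γ1, γ2, γ3, Matrix.mul_apply, Fin.sum_univ_four]

theorem γ_mul_aux (μ ν : Fin 4) :
    (γ μ * γ ν).transpose * Cmat = Cmat * (γ ν * γ μ) := by
  rw [Matrix.transpose_mul, Matrix.mul_assoc, γ_transpose_aux, ← Matrix.mul_assoc,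
    γ_transpose_aux, Matrix.mul_assoc]

theorem Sgen_transpose_aux (ρ σ : Fin 4) :
    (Sgen ρ σ).transpose * Cmat = -(Cmat * Sgen ρ σ) := by
  simp only [Sgen, Matrix.transpose_smul, Matrix.transpose_sub, Matrix.smul_mul,
    Matrix.mul_smul, Matrix.sub_mul, Matrix.mul_sub, γ_mul_aux]
  rw [← smul_neg, neg_sub]

theorem exp_preserve_aux (A : Matrix (Fin 4) (Fin 4) ℂ)
    (h : A.transpose * Cmat = -(Cmat * A)) :
    (NormedSpace.exp A).transpose * Cmat * NormedSpace.exp A = Cmat := by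
  have hinv : Cmat⁻¹ = Cmat := Matrix.inv_eq_right_inv Cmat_sq_aux
  have hu : IsUnit Cmat := ⟨⟨Cmat, Cmat, Cmat_sq_aux, Cmat_sq_aux⟩, rfl⟩
  have hA : A.transpose = Cmat * (-A) * Cmat⁻¹ := by
    rw [hinv, Matrix.mul_neg, ← h, Matrix.mul_assoc, Cmat_sq_aux, Matrix.mul_one]
  have hE : IsUnit (NormedSpace.exp A) := Matrix.isUnit_exp A
  rw [← Matrix.exp_transpose, hA, Matrix.exp_conj _ _ hu, hinv, Matrix.mul_assoc _ Cmat Cmat,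
    Cmat_sq_aux, Matrix.mul_one, Matrix.mul_assoc, Matrix.exp_neg,
    Matrix.nonsing_inv_mul _ ((Matrix.isUnit_iff_isUnit_det _).1 hE), Matrix.mul_one]

/-- The spinor representation `S = exp((1/2) ∑ ω_{ρσ} S^{ρσ})` of any proper orthochronous
Lorentz transformation preserves the skew-symmetric bilinear form determined by `C`:
`Sᵀ C S = C`. -/
theorem spinor_rep_preserves_C (ω : Fin 4 → Fin 4 → ℝ) :
    (NormedSpace.exp
        ((1 / 2 : ℂ) • ∑ ρ : Fin 4, ∑ σ : Fin 4, (ω ρ σ : ℂ) • Sgen ρ σ)).transpose *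
        Cmat *
        NormedSpace.exp
          ((1 / 2 : ℂ) • ∑ ρ : Fin 4, ∑ σ : Fin 4, (ω ρ σ : ℂ) • Sgen ρ σ) = Cmat := by
  apply exp_preserve_aux
  simp only [Matrix.transpose_smul, Matrix.transpose_sum, Matrix.smul_mul, Matrix.mul_smul,
    Finset.sum_mul, Finset.mul_sum, Sgen_transpose_aux, smul_neg, Finset.sum_neg_distrib]
end

section
/- Let n ∈ ℕ, let X be an n×n complex matrix, and let H : ℝ → Matrix (Fin n) (Fin n) ℂ satisfy X * H t = −(H t)ᵀ * X for all t ∈ ℝ. Suppose U : ℝ → Matrix (Fin n) (Fin n) ℂ satisfies U 0 = 1 and, for every t ∈ ℝ, U has derivative (−Complex.I) • (H t * U t) at t. Then (U t)ᵀ * X * U t = X for all t ∈ ℝ. (A bilinear form ψᵀ X φ is invariant under any evolution generated by Hamiltonians H(t) satisfying X H(t) = −H(t)ᵀ X.) -/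
attribute [local instance] Matrix.normedAddCommGroup Matrix.normedSpace

theorem entry_mul_aux {n : ℕ} {A B : ℝ → Matrix (Fin n) (Fin n) ℂ}
    {A' B' : Matrix (Fin n) (Fin n) ℂ} {t : ℝ}
    (hA : ∀ i j, HasDerivAt (fun s => A s i j) (A' i j) t)
    (hB : ∀ i j, HasDerivAt (fun s => B s i j) (B' i j) t) (i j : Fin n) :
    HasDerivAt (fun s => (A s * B s) i j) ((A' * B t + A t * B') i j) t := by
  simp only [Matrix.mul_apply, Matrix.add_apply, ← Finset.sum_add_distrib]
  exact HasDerivAt.fun_sum fun k _ => (hA i k).mul (hB k j)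

/-- A bilinear form `ψᵀ X φ` is invariant under any evolution `U` generated by Hamiltonians
`H t` satisfying `X H(t) = −H(t)ᵀ X`. -/
theorem bilinear_form_invariant_under_evolution
    (n : ℕ) (X : Matrix (Fin n) (Fin n) ℂ) (H : ℝ → Matrix (Fin n) (Fin n) ℂ)
    (hXH : ∀ t : ℝ, X * H t = -((H t).transpose * X))
    (U : ℝ → Matrix (Fin n) (Fin n) ℂ)
    (hU0 : U 0 = 1)
    (hU : ∀ t : ℝ, HasDerivAt U ((-Complex.I) • (H t * U t)) t) :
    ∀ t : ℝ, (U t).transpose * X * U t = X := by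
  have hE : ∀ t i j, HasDerivAt (fun s => U s i j) (((-Complex.I) • (H t * U t)) i j) t := by
    intro t i j
    exact hasDerivAt_pi.1 (hasDerivAt_pi.1 (hU t) i) j
  have hD : ∀ i j t, HasDerivAt (fun s => ((U s).transpose * X * U s) i j) 0 t := by
    intro i j t
    have h1 := entry_mul_aux (A := fun s => (U s).transpose) (B := fun _ => X)
      (A' := ((-Complex.I) • (H t * U t)).transpose) (B' := 0) (t := t)
      (fun i j => hE t j i) (fun i j => hasDerivAt_const t (X i j))
    have h2 := entry_mul_aux (A := fun s => (U s).transpose * X) h1 (hE t) i j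
    convert h2 using 1
    have h3 : (U t).transpose * X * (H t * U t)
        = -((U t).transpose * (H t).transpose * X * U t) := by
      calc _ = (U t).transpose * (X * H t) * U t := by simp only [Matrix.mul_assoc]
        _ = _ := by
          rw [hXH]
          simp only [Matrix.mul_neg, Matrix.neg_mul, Matrix.mul_assoc]
    rw [Matrix.mul_smul, h3]
    simp [Matrix.transpose_mul, Matrix.mul_assoc]
  intro t
  ext i j
  have h := is_const_of_deriv_eq_zero (fun s => (hD i j s).differentiableAt)
    (fun s => (hD i j s).deriv) t 0
  simpa [hU0] using h
end

section
/- For any coefficients η : Fin 4 → ℂ and λ : Fin 4 → Fin 4 → ℂ, let H = ∑_μ η μ • γ^μ + ∑_{μ ≠ ν} λ μ ν • (γ^μ * γ^ν) (the second sum over pairs of distinct indices). Then (C * γ⁵) * H = −Hᵀ * (C * γ⁵). (Every Hamiltonian term of first or second degree in distinct gamma matrices, in particular every Dirac Hamiltonian with arbitrary mass after removal of the term proportional to the identity, anti-intertwines with C γ⁵.) -/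
theorem Cγ5_eq : Cmat * γ5 =
    !![0, 0, 0, Complex.I; 0, 0, -Complex.I, 0; 0, Complex.I, 0, 0; -Complex.I, 0, 0, 0] := by
  ext i j
  fin_cases i <;> fin_cases j <;>
    simp [Cmat, γ5, γ0, γ1, γ2, γ3, Matrix.mul_apply, Fin.sum_univ_four]

theorem key_one (μ : Fin 4) : (Cmat * γ5) * γ μ = -((γ μ).transpose * (Cmat * γ5)) := by
  rw [Cγ5_eq]
  ext i j
  fin_cases μ <;> fin_cases i <;> fin_cases j <;>
    simp [γ, γ0, γ1, γ2, γ3, Matrix.mul_apply, Fin.sum_univ_four]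

set_option maxHeartbeats 2000000 in
theorem anti_comm (μ ν : Fin 4) (h : μ ≠ ν) : γ μ * γ ν = -(γ ν * γ μ) := by
  ext i j
  fin_cases μ <;> fin_cases ν <;> first | exact absurd rfl h | skip
  all_goals
    fin_cases i <;> fin_cases j <;>
      simp [γ, γ0, γ1, γ2, γ3, Matrix.mul_apply, Fin.sum_univ_four]

theorem key_two (μ ν : Fin 4) (h : μ ≠ ν) :
    (Cmat * γ5) * (γ μ * γ ν) = -((γ μ * γ ν).transpose * (Cmat * γ5)) := by
  rw [← Matrix.mul_assoc, key_one, Matrix.neg_mul, Matrix.mul_assoc, key_one, Matrix.mul_neg,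
    anti_comm μ ν h, Matrix.transpose_neg, Matrix.transpose_mul, Matrix.neg_mul,
    Matrix.mul_assoc]

/-- Every Hamiltonian term of first or second degree in distinct gamma matrices
anti-intertwines with `C γ⁵`: `(C γ⁵) H = −Hᵀ (C γ⁵)`. -/
theorem first_second_degree_anti_intertwines_Cγ5
    (η : Fin 4 → ℂ) (lam : Fin 4 → Fin 4 → ℂ) :
    (Cmat * γ5) *
        ((∑ μ : Fin 4, η μ • γ μ) +
          ∑ μ : Fin 4, ∑ ν : Fin 4, if μ ≠ ν then lam μ ν • (γ μ * γ ν) else 0) =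
      -(((∑ μ : Fin 4, η μ • γ μ) +
          ∑ μ : Fin 4, ∑ ν : Fin 4, if μ ≠ ν then lam μ ν • (γ μ * γ ν) else 0).transpose *
        (Cmat * γ5)) := by
  simp only [Matrix.transpose_add, Matrix.transpose_sum, Matrix.mul_add, Matrix.add_mul,
    Matrix.mul_sum, Matrix.sum_mul, neg_add, ← Finset.sum_neg_distrib]
  congr 1
  · refine Finset.sum_congr rfl fun μ _ => ?_
    rw [Matrix.mul_smul, key_one, Matrix.transpose_smul, Matrix.smul_mul, smul_neg]
  · refine Finset.sum_congr rfl fun μ _ => Finset.sum_congr rfl fun ν _ => ?_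
    split_ifs with h
    · rw [Matrix.mul_smul, key_two μ ν h, Matrix.transpose_smul, Matrix.smul_mul, smul_neg]
    · simp
end

section
/- For any coefficients λ : Fin 4 → Fin 4 → ℂ and κ : Fin 4 → Fin 4 → Fin 4 → ℂ, let H = ∑_{μ ≠ ν} λ μ ν • (γ^μ * γ^ν) + ∑_{μ,ν,ρ pairwise distinct} κ μ ν ρ • (γ^μ * γ^ν * γ^ρ) (sums restricted to tuples of pairwise distinct indices). Then C * H = −Hᵀ * C. (Every Hamiltonian term of second or third degree in distinct gamma matrices, in particular every zero-mass Dirac Hamiltonian with a Yukawa pseudo-scalar coupling after removal of the term proportional to the identity, anti-intertwines with C.) -/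
theorem C_gamma (μ : Fin 4) : Cmat * γ μ = (γ μ).transpose * Cmat := by
  fin_cases μ <;> ext i j <;> fin_cases i <;> fin_cases j <;>
    simp [Cmat, γ, γ0, γ1, γ2, γ3, Matrix.mul_apply, Fin.sum_univ_four]

set_option maxHeartbeats 4000000 in
theorem gamma_anti (μ ν : Fin 4) (h : μ ≠ ν) : γ ν * γ μ = -(γ μ * γ ν) := by
  fin_cases μ <;> fin_cases ν <;> first
    | exact absurd rfl h
    | (ext i j; fin_cases i <;> fin_cases j <;>
        simp [γ, γ0, γ1, γ2, γ3, Matrix.mul_apply, Fin.sum_univ_four])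

theorem C_two (μ ν : Fin 4) (h : μ ≠ ν) :
    Cmat * (γ μ * γ ν) = -((γ μ * γ ν).transpose * Cmat) := by
  rw [← Matrix.neg_mul, ← Matrix.transpose_neg, ← gamma_anti μ ν h, Matrix.transpose_mul,
    ← Matrix.mul_assoc, C_gamma, Matrix.mul_assoc, C_gamma, Matrix.mul_assoc]

theorem C_three (μ ν ρ : Fin 4) (h : μ ≠ ν) (h1 : μ ≠ ρ) (h2 : ν ≠ ρ) :
    Cmat * (γ μ * γ ν * γ ρ) = -((γ μ * γ ν * γ ρ).transpose * Cmat) := by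
  have e : γ ρ * (γ ν * γ μ) = -(γ μ * γ ν * γ ρ) := by
    rw [gamma_anti μ ν h, Matrix.mul_neg, ← Matrix.mul_assoc, gamma_anti μ ρ h1,
      Matrix.neg_mul, Matrix.mul_assoc, gamma_anti ν ρ h2, Matrix.mul_neg, Matrix.mul_assoc]
    simp
  rw [← Matrix.neg_mul, ← Matrix.transpose_neg, ← e, Matrix.transpose_mul, Matrix.transpose_mul,
    ← Matrix.mul_assoc, ← Matrix.mul_assoc, C_gamma, Matrix.mul_assoc _ Cmat, C_gamma,
    Matrix.mul_assoc, Matrix.mul_assoc, C_gamma]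
  simp only [Matrix.mul_assoc]

/-- Every Hamiltonian term of second or third degree in distinct gamma matrices
anti-intertwines with `C`: `C H = −Hᵀ C`. -/
theorem second_third_degree_anti_intertwines_C
    (lam : Fin 4 → Fin 4 → ℂ) (κ : Fin 4 → Fin 4 → Fin 4 → ℂ) :
    Cmat *
        ((∑ μ : Fin 4, ∑ ν : Fin 4, if μ ≠ ν then lam μ ν • (γ μ * γ ν) else 0) +
          ∑ μ : Fin 4, ∑ ν : Fin 4, ∑ ρ : Fin 4,
            if μ ≠ ν ∧ μ ≠ ρ ∧ ν ≠ ρ then κ μ ν ρ • (γ μ * γ ν * γ ρ) else 0) =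
      -(((∑ μ : Fin 4, ∑ ν : Fin 4, if μ ≠ ν then lam μ ν • (γ μ * γ ν) else 0) +
          ∑ μ : Fin 4, ∑ ν : Fin 4, ∑ ρ : Fin 4,
            if μ ≠ ν ∧ μ ≠ ρ ∧ ν ≠ ρ then κ μ ν ρ • (γ μ * γ ν * γ ρ) else 0).transpose *
        Cmat) := by
  simp only [Matrix.mul_add, Matrix.transpose_add, Matrix.add_mul, neg_add, Matrix.mul_sum,
    Matrix.transpose_sum, Matrix.sum_mul, ← Finset.sum_neg_distrib]
  congr 1
  · refine Finset.sum_congr rfl fun μ _ => Finset.sum_congr rfl fun ν _ => ?_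
    split_ifs with h
    · rw [Matrix.mul_smul, C_two μ ν h, Matrix.transpose_smul, Matrix.smul_mul, smul_neg]
    · simp
  · refine Finset.sum_congr rfl fun μ _ => Finset.sum_congr rfl fun ν _ =>
      Finset.sum_congr rfl fun ρ _ => ?_
    split_ifs with h
    · rw [Matrix.mul_smul, C_three μ ν ρ h.1 h.2.1 h.2.2, Matrix.transpose_smul,
        Matrix.smul_mul, smul_neg]
    · simp
end

section
/- Let N be an odd natural number, let X : Fin N → Matrix (Fin 4) (Fin 4) ℂ be matrices with (X i)ᵀ = −(X i) for every i, and let ψ : (Fin N → Fin 4) → ℂ. Then ∑_{f : Fin N → Fin 4} ∑_{g : Fin N → Fin 4} (∏_{i : Fin N} X i (g i) (f i)) * ψ f * ψ g = 0. (Every degree-2 tensor sandwich contraction built from antisymmetric matrices — in particular from C and C γ⁵ — vanishes identically for an odd number of Dirac spinors; this is why no nonzero degree-2 Lorentz invariant polynomial exists for three or five spinors.) -/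
/-- Every degree-2 tensor sandwich contraction built from antisymmetric matrices vanishes
identically for an odd number of Dirac spinors. -/
theorem odd_spinor_degree_two_contraction_vanishes
    (N : ℕ) (hN : Odd N)
    (X : Fin N → Matrix (Fin 4) (Fin 4) ℂ)
    (hX : ∀ i : Fin N, (X i).transpose = -(X i))
    (ψ : (Fin N → Fin 4) → ℂ) :
    ∑ f : Fin N → Fin 4, ∑ g : Fin N → Fin 4,
      (∏ i : Fin N, X i (g i) (f i)) * ψ f * ψ g = 0 := by
  have key : ∀ f g : Fin N → Fin 4,
      (∏ i : Fin N, X i (g i) (f i)) = -(∏ i : Fin N, X i (f i) (g i)) := by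
    intro f g
    have h : ∀ i : Fin N, X i (g i) (f i) = -(X i (f i) (g i)) := by
      intro i
      have h1 := congrFun (congrFun (hX i) (f i)) (g i)
      simpa [Matrix.transpose_apply] using h1
    rw [Finset.prod_congr rfl (fun i _ => h i), Finset.prod_neg]
    simp [hN.neg_one_pow]
  rw [← self_eq_neg]
  conv_lhs => rw [Finset.sum_comm]
  rw [← Finset.sum_neg_distrib]
  refine Finset.sum_congr rfl fun f _ => ?_
  rw [← Finset.sum_neg_distrib]
  refine Finset.sum_congr rfl fun g _ => ?_
  rw [key f g]
  ring
end

section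
/- Let A₁, B₁, C₁, A₂, B₂, C₂ be 4×4 complex matrices with A₁ᵀ = −A₁, let a : Fin 4 → ℂ and b : Fin 4 → Fin 4 → ℂ, and define the product-state tensor Ψ j k l = a j * b k l. Then the degree-4 tensor sandwich contraction ∑_{i,j,k,l,m,n,p,q,r,s,t,u : Fin 4} A₁ i j * B₁ m k * C₁ n l * Ψ j k l * Ψ q m n * A₂ q r * B₂ p s * C₂ u t * Ψ r s t * Ψ i p u equals 0. (The degree-4 invariants of type I_a for three spinors vanish identically on states where the first spinor is in a product with the other two, due to the antisymmetry of the matrix sandwiched between the first-spinor indices.) -/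
theorem aux_antisymm_sum (F : Fin 4 → Fin 4 → ℂ) (h : ∀ i j, F j i = - F i j) :
    ∑ i, ∑ j, F i j = 0 := by
  refine self_eq_neg.mp ?_
  conv_lhs => rw [Finset.sum_comm]
  simp only [← Finset.sum_neg_distrib]
  exact Finset.sum_congr rfl fun i _ => Finset.sum_congr rfl fun j _ => h i j

/-- The degree-4 tensor sandwich contraction of type `I_a` for three spinors vanishes
identically on states where the first spinor is in a product with the other two, due to
the antisymmetry of the matrix sandwiched between the first-spinor indices. -/
theorem degree_four_Ia_contraction_vanishes_on_product_states
    (A₁ B₁ C₁ A₂ B₂ C₂ : Matrix (Fin 4) (Fin 4) ℂ)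
    (hA₁ : A₁.transpose = -A₁)
    (a : Fin 4 → ℂ) (b : Fin 4 → Fin 4 → ℂ) :
    ∑ i : Fin 4, ∑ j : Fin 4, ∑ k : Fin 4, ∑ l : Fin 4, ∑ m : Fin 4, ∑ n : Fin 4,
      ∑ p : Fin 4, ∑ q : Fin 4, ∑ r : Fin 4, ∑ s : Fin 4, ∑ t : Fin 4, ∑ u : Fin 4,
        A₁ i j * B₁ m k * C₁ n l * (a j * b k l) * (a q * b m n) *
          A₂ q r * B₂ p s * C₂ u t * (a r * b s t) * (a i * b p u) = 0 := by
  have h : ∀ i j, A₁ j i = - A₁ i j := fun i j => congrFun (congrFun hA₁ i) j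
  refine aux_antisymm_sum _ fun i j => ?_
  simp only [← Finset.sum_neg_distrib]
  iterate 10 refine Finset.sum_congr rfl fun _ _ => ?_
  rw [h i j]
  ring
end

section
/- For every family of real coefficients ω : Fin 4 → Fin 4 → ℝ, let S = Matrix.exp ℂ ((1/2) • ∑_{ρ,σ} (ω ρ σ : ℂ) • S^{ρσ}). Then for each μ ∈ {0,1,2,3} there exist real coefficients Λ : Fin 4 → ℝ such that S⁻¹ * γ^μ * S = ∑_{ν} (Λ ν : ℂ) • γ^ν. (Conjugation by the spinor representation of a proper orthochronous Lorentz transformation carries each gamma matrix into a real linear combination of the gamma matrices, S(Λ)⁻¹ γ^μ S(Λ) = ∑_ν Λ^μ_ν γ^ν, which expresses the Lorentz covariance of the Dirac equation.) -/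
open NormedSpace in
theorem conj_exp_mem_aux {B : Type*} [NormedRing B] [NormedAlgebra ℝ B] [CompleteSpace B]
    (V : Submodule ℝ B) (hV : IsClosed (V : Set B)) (A : B)
    (hA : ∀ x ∈ V, x * A - A * x ∈ V) (x : B) (hx : x ∈ V) :
    exp (-A) * x * exp A ∈ V := by
  let L : B →L[ℝ] B := ContinuousLinearMap.mul ℝ B (-A)
  let R : B →L[ℝ] B := (ContinuousLinearMap.mul ℝ B).flip A
  have key : ∀ (T : B →L[ℝ] B) (y : B),
      HasSum (fun n : ℕ => ((n.factorial : ℝ)⁻¹) • (T ^ n) y) (exp T y) := by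
    intro T y
    have h := (exp_series_hasSum_exp' (𝕂 := ℝ) T).mapL (ContinuousLinearMap.apply ℝ B y)
    simpa using h
  have hL : ∀ y, exp L y = exp (-A) * y := by
    intro y
    refine (key L y).unique ?_
    have h := (exp_series_hasSum_exp' (𝕂 := ℝ) (-A)).mul_right y
    refine (congrArg (fun f : ℕ → B => HasSum f _) (funext fun n => ?_)).mpr h
    have : (L ^ n) y = (-A) ^ n * y := by
      induction n with
      | zero => simp
      | succ n ih => rw [pow_succ', pow_succ', mul_apply_eq_comp, ih, mul_assoc]; rfl
    rw [this, smul_mul_assoc]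
  have hR : ∀ y, exp R y = y * exp A := by
    intro y
    refine (key R y).unique ?_
    have h := (exp_series_hasSum_exp' (𝕂 := ℝ) A).mul_left y
    refine (congrArg (fun f : ℕ → B => HasSum f _) (funext fun n => ?_)).mpr h
    have : (R ^ n) y = y * A ^ n := by
      induction n with
      | zero => simp
      | succ n ih => rw [pow_succ', pow_succ, mul_apply_eq_comp, ih, ← mul_assoc]; rfl
    rw [this, mul_smul_comm]
  have hc : Commute R L := by
    ext y
    change (-A * y) * A = -A * (y * A)
    rw [mul_assoc]
  have he : exp (-A) * x * exp A = exp (R + L) x := by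
    letI : NormedAlgebra ℚ (B →L[ℝ] B) := NormedAlgebra.restrictScalars ℚ ℝ _
    rw [exp_add_of_commute hc, mul_apply_eq_comp, hL, hR]
  rw [he]
  have hn : ∀ n : ℕ, ((R + L) ^ n) x ∈ V := by
    intro n
    induction n with
    | zero => simpa using hx
    | succ n ih =>
      rw [pow_succ', mul_apply_eq_comp]
      have := hA _ ih
      rw [sub_eq_add_neg, ← neg_mul] at this
      exact this
  exact hV.mem_of_tendsto (key (R + L) x)
    (Filter.Eventually.of_forall fun s => V.sum_mem fun i _ => V.smul_mem _ (hn i))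

set_option maxHeartbeats 4000000 in
theorem clifford_aux (μ ν : Fin 4) :
    ∃ r : ℝ, γ μ * γ ν + γ ν * γ μ = r • (1 : Matrix (Fin 4) (Fin 4) ℂ) := by
  refine ⟨if μ = ν then (if μ = 0 then 2 else -2) else 0, ?_⟩
  fin_cases μ <;> fin_cases ν <;> ext i j <;> fin_cases i <;> fin_cases j <;>
    simp [γ, γ0, γ1, γ2, γ3, Matrix.mul_apply, Fin.sum_univ_four] <;> norm_num

theorem comm_Sgen_aux (μ ρ σ : Fin 4) :
    γ μ * Sgen ρ σ - Sgen ρ σ * γ μ ∈ Submodule.span ℝ (Set.range γ) := by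
  obtain ⟨r, hr⟩ := clifford_aux μ ρ
  obtain ⟨s, hs⟩ := clifford_aux μ σ
  have e : γ μ * (γ ρ * γ σ - γ σ * γ ρ) - (γ ρ * γ σ - γ σ * γ ρ) * γ μ
      = (2 * r) • γ σ - (2 * s) • γ ρ := by
    have e1 : (γ μ * γ ρ + γ ρ * γ μ) * γ σ = r • γ σ := by rw [hr]; simp
    have e2 : γ σ * (γ μ * γ ρ + γ ρ * γ μ) = r • γ σ := by rw [hr]; simp
    have e3 : (γ μ * γ σ + γ σ * γ μ) * γ ρ = s • γ ρ := by rw [hs]; simp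
    have e4 : γ ρ * (γ μ * γ σ + γ σ * γ μ) = s • γ ρ := by rw [hs]; simp
    rw [two_mul, two_mul, add_smul, add_smul]
    nth_rewrite 1 [← e1]
    rw [← e2, ← e3]
    nth_rewrite 1 [e3]
    rw [← e4]
    noncomm_ring
  have e' : γ μ * Sgen ρ σ - Sgen ρ σ * γ μ
      = (1 / 4 : ℝ) • ((2 * r) • γ σ - (2 * s) • γ ρ) := by
    rw [← e, Sgen, mul_smul_comm, smul_mul_assoc, ← smul_sub,
      ← Complex.coe_smul (1 / 4 : ℝ)]
    norm_num
  rw [e']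
  exact Submodule.smul_mem _ _ (Submodule.sub_mem _
    (Submodule.smul_mem _ _ (Submodule.subset_span ⟨σ, rfl⟩))
    (Submodule.smul_mem _ _ (Submodule.subset_span ⟨ρ, rfl⟩)))

/-- Conjugation by the spinor representation `S = exp((1/2) ∑ ω_{ρσ} S^{ρσ})` of a proper
orthochronous Lorentz transformation carries each gamma matrix into a real linear
combination of the gamma matrices: `S⁻¹ γ^μ S = ∑_ν Λ^μ_ν γ^ν`. -/
theorem gamma_conjugation_by_spinor_rep (ω : Fin 4 → Fin 4 → ℝ) (μ : Fin 4) :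
    ∃ Λ : Fin 4 → ℝ,
      (NormedSpace.exp
          ((1 / 2 : ℂ) • ∑ ρ : Fin 4, ∑ σ : Fin 4, (ω ρ σ : ℂ) • Sgen ρ σ))⁻¹ *
          γ μ *
          NormedSpace.exp
            ((1 / 2 : ℂ) • ∑ ρ : Fin 4, ∑ σ : Fin 4, (ω ρ σ : ℂ) • Sgen ρ σ) =
        ∑ ν : Fin 4, ((Λ ν : ℂ)) • γ ν := by
  set A := (1 / 2 : ℂ) • ∑ ρ : Fin 4, ∑ σ : Fin 4, (ω ρ σ : ℂ) • Sgen ρ σ with hAdef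
  have hA' : A = (1 / 2 : ℝ) • ∑ ρ : Fin 4, ∑ σ : Fin 4, (ω ρ σ) • Sgen ρ σ := by
    rw [hAdef]
    simp only [← Complex.coe_smul]
    push_cast
    rfl
  clear_value A
  have hA : ∀ x ∈ Submodule.span ℝ (Set.range γ),
      x * A - A * x ∈ Submodule.span ℝ (Set.range γ) := by
    intro x hx
    induction hx using Submodule.span_induction with
    | mem x h =>
      obtain ⟨μ, rfl⟩ := h
      rw [hA', mul_smul_comm, smul_mul_assoc, ← smul_sub]
      refine Submodule.smul_mem _ _ ?_
      simp only [Finset.mul_sum, Finset.sum_mul, ← Finset.sum_sub_distrib, mul_smul_comm,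
        smul_mul_assoc, ← smul_sub]
      exact Submodule.sum_mem _ fun ρ _ => Submodule.sum_mem _ fun σ _ =>
        Submodule.smul_mem _ _ (comm_Sgen_aux μ ρ σ)
    | zero => simp
    | add x y _ _ hx hy =>
      have := Submodule.add_mem _ hx hy
      convert this using 1
      noncomm_ring
    | smul c x _ hx =>
      rw [smul_mul_assoc, mul_smul_comm, ← smul_sub]
      exact Submodule.smul_mem _ _ hx
  have main : NormedSpace.exp (-A) * γ μ * NormedSpace.exp A ∈
      Submodule.span ℝ (Set.range γ) := by
    letI : NormedRing (Matrix (Fin 4) (Fin 4) ℂ) := Matrix.linftyOpNormedRing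
    letI : NormedAlgebra ℝ (Matrix (Fin 4) (Fin 4) ℂ) := Matrix.linftyOpNormedAlgebra
    exact conj_exp_mem_aux _ (Submodule.closed_of_finiteDimensional _) A hA _
      (Submodule.subset_span ⟨μ, rfl⟩)
  rw [← Matrix.exp_neg]
  obtain ⟨c, hc⟩ := (Submodule.mem_span_range_iff_exists_fun ℝ).1 main
  refine ⟨c, ?_⟩
  rw [← hc]
  simp only [Complex.coe_smul]
end
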